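/- The mean of a Gaussian random variable with mean θ and variance v, truncated to the region [0, ∞), is monotonically increasing as a function of θ. -/

import Mathlib

open MeasureTheory ProbabilityTheory Real
open scoped NNReal

/-!
The Gaussian densities with a fixed variance have monotone likelihood ratio in the mean. If the
likelihood ratio of `f` and `g` is monotone and `h` is monotone, then
`(h y - h x) * (f x * g y - f y * g x)` is nonnegative for all `x` and `y`, and integrating it over
both variables gives `(∫ f h) (∫ g) ≤ (∫ g h) (∫ f)`. Truncation only changes the base measure.
-/

/-- The likelihood ratio `g / f` of two densities is monotone. The inequality is stated with the
denominators cleared, so that the densities may vanish. -/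
def HasMonotoneLikelihoodRatio {α : Type*} [LE α] (f g : α → ℝ) : Prop :=
  ∀ ⦃x y⦄, x ≤ y → f y * g x ≤ f x * g y

namespace HasMonotoneLikelihoodRatio

variable {α : Type*} [LinearOrder α] {f g h : α → ℝ}

lemma sub_mul_sub_nonneg (hfg : HasMonotoneLikelihoodRatio f g) (hh : Monotone h) (x y : α) :
    0 ≤ (h y - h x) * (f x * g y - f y * g x) := by
  rcases le_total x y with hxy | hyx
  · exact mul_nonneg (sub_nonneg.2 (hh hxy)) (sub_nonneg.2 (hfg hxy))
  · exact mul_nonneg_of_nonpos_of_nonpos (sub_nonpos.2 (hh hyx))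
      (by linarith [hfg hyx])

theorem integral_mul_mul_integral_le [MeasurableSpace α] {μ : Measure α} [SFinite μ]
    (hfg : HasMonotoneLikelihoodRatio f g) (hh : Monotone h)
    (hf : Integrable f μ) (hg : Integrable g μ)
    (hfh : Integrable (fun x ↦ f x * h x) μ) (hgh : Integrable (fun x ↦ g x * h x) μ) :
    (∫ x, f x * h x ∂μ) * ∫ x, g x ∂μ ≤ (∫ x, g x * h x ∂μ) * ∫ x, f x ∂μ := by
  have expand (z : α × α) : (h z.2 - h z.1) * (f z.1 * g z.2 - f z.2 * g z.1) =
      (f z.1 * (g z.2 * h z.2) + g z.1 * h z.1 * f z.2) -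
        (f z.1 * h z.1 * g z.2 + g z.1 * (f z.2 * h z.2)) := by ring
  have double_integral :
      ∫ z, (h z.2 - h z.1) * (f z.1 * g z.2 - f z.2 * g z.1) ∂(μ.prod μ) =
        2 * ((∫ x, g x * h x ∂μ) * ∫ x, f x ∂μ - (∫ x, f x * h x ∂μ) * ∫ x, g x ∂μ) := by
    simp only [expand]
    rw [integral_sub ((hf.mul_prod hgh).fun_add (hgh.mul_prod hf))
        ((hfh.mul_prod hg).fun_add (hg.mul_prod hfh)),
      integral_add (hf.mul_prod hgh) (hgh.mul_prod hf),
      integral_add (hfh.mul_prod hg) (hg.mul_prod hfh),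
      integral_prod_mul f (fun x ↦ g x * h x), integral_prod_mul (fun x ↦ g x * h x) f,
      integral_prod_mul (fun x ↦ f x * h x) g, integral_prod_mul g (fun x ↦ f x * h x)]
    ring
  have double_integral_nonneg :
      0 ≤ ∫ z, (h z.2 - h z.1) * (f z.1 * g z.2 - f z.2 * g z.1) ∂(μ.prod μ) :=
    integral_nonneg fun z ↦ hfg.sub_mul_sub_nonneg hh z.1 z.2
  linarith

end HasMonotoneLikelihoodRatio

section Gaussian

variable {v : ℝ≥0}

lemma hasMonotoneLikelihoodRatio_gaussianPDFReal {a b : ℝ} (hab : a ≤ b) (v : ℝ≥0) :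
    HasMonotoneLikelihoodRatio (gaussianPDFReal a v) (gaussianPDFReal b v) := by
  intro x y hxy
  have sq_add_sq_le : (x - a) ^ 2 + (y - b) ^ 2 ≤ (y - a) ^ 2 + (x - b) ^ 2 := by
    linarith [mul_nonneg (sub_nonneg.2 hab) (sub_nonneg.2 hxy)]
  simp only [gaussianPDFReal]
  rw [mul_mul_mul_comm, mul_mul_mul_comm _ (rexp (-(x - a) ^ 2 / _)), ← exp_add, ← exp_add,
    ← add_div, ← add_div]
  gcongr _ * rexp (?_ / _)
  linarith

lemma measureReal_gaussianReal_pos (θ : ℝ) (hv : v ≠ 0) {s : Set ℝ} (hs : volume s ≠ 0) :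
    0 < (gaussianReal θ v).real s :=
  ENNReal.toReal_pos (fun h ↦ hs (gaussianReal_absolutelyContinuous' θ hv h)) (measure_ne_top _ _)

lemma measureReal_gaussianReal_eq_setIntegral (θ : ℝ) (hv : v ≠ 0) (s : Set ℝ) :
    (gaussianReal θ v).real s = ∫ x in s, gaussianPDFReal θ v x := by
  rw [measureReal_def, gaussianReal_apply_eq_integral _ hv, ENNReal.toReal_ofReal]
  exact integral_nonneg (gaussianPDFReal_nonneg θ v)

variable {E : Type*} [NormedAddCommGroup E] [NormedSpace ℝ E]

lemma setIntegral_gaussianReal_eq_setIntegral_smul (θ : ℝ) (hv : v ≠ 0) (s : Set ℝ) (f : ℝ → E) :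
    ∫ x in s, f x ∂(gaussianReal θ v) = ∫ x in s, gaussianPDFReal θ v x • f x := by
  rw [gaussianReal_of_var_ne_zero _ hv,
    setIntegral_withDensity_eq_setIntegral_toReal_smul' s (measurable_gaussianPDF θ v)
      (ae_of_all _ fun _ ↦ gaussianPDF_lt_top)]
  simp only [toReal_gaussianPDF]

lemma integrableOn_gaussianReal_iff_integrableOn_smul (θ : ℝ) (hv : v ≠ 0) {s : Set ℝ}
    {f : ℝ → E} :
    IntegrableOn f s (gaussianReal θ v) ↔ IntegrableOn (fun x ↦ gaussianPDFReal θ v x • f x) s := by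
  rw [gaussianReal_of_var_ne_zero _ hv, IntegrableOn, restrict_withDensity',
    integrable_withDensity_iff_integrable_smul' (measurable_gaussianPDF θ v)
      (ae_of_all _ fun _ ↦ gaussianPDF_lt_top)]
  simp only [toReal_gaussianPDF, IntegrableOn]

end Gaussian

theorem truncated_gaussian_mean_monotone_general {v : ℝ≥0} (hv : v ≠ 0) {s : Set ℝ}
    (hs : volume s ≠ 0) {h : ℝ → ℝ} (hh : Monotone h)
    (hint : ∀ θ, IntegrableOn h s (gaussianReal θ v)) :
    Monotone fun θ : ℝ ↦ (∫ x in s, h x ∂(gaussianReal θ v)) / (gaussianReal θ v).real s := by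
  intro a b hab
  beta_reduce
  rw [div_le_div_iff₀ (measureReal_gaussianReal_pos a hv hs) (measureReal_gaussianReal_pos b hv hs)]
  simp only [setIntegral_gaussianReal_eq_setIntegral_smul _ hv,
    measureReal_gaussianReal_eq_setIntegral _ hv]
  have integrable_pdf (θ : ℝ) : IntegrableOn (gaussianPDFReal θ v) s :=
    (integrable_gaussianPDFReal θ v).integrableOn
  have integrable_pdf_smul (θ : ℝ) : IntegrableOn (fun x ↦ gaussianPDFReal θ v x • h x) s :=
    (integrableOn_gaussianReal_iff_integrableOn_smul θ hv).1 (hint θ)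
  exact (hasMonotoneLikelihoodRatio_gaussianPDFReal hab v).integral_mul_mul_integral_le hh
    (integrable_pdf a) (integrable_pdf b) (integrable_pdf_smul a) (integrable_pdf_smul b)

/-- The mean of a Gaussian `N(θ, v)` truncated to `[0, ∞)` is monotonically
increasing as a function of `θ`. -/
theorem truncated_gaussian_mean_monotone (v : ℝ≥0) (hv : 0 < v) :
    Monotone (fun θ : ℝ =>
      (∫ x in Set.Ici (0 : ℝ), x ∂(gaussianReal θ v)) /
        ((gaussianReal θ v) (Set.Ici (0 : ℝ))).toReal) :=
  truncated_gaussian_mean_monotone_general hv.ne' (by simp) monotone_id fun _ ↦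
    ((memLp_id_gaussianReal 1).integrable (by simp)).integrableOn
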